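/- arXiv:2011.09758 — 2 statements merged into one kernel-verified Lean document; each statement's English description precedes it below -/
import Mathlib

section
/- Let U be a distributive submodular universe and 𝒫 a set of pairwise distinguishable strongly robust profiles in U. Suppose r and s are F_d-critical separations in U with r ≤ s*. Then every splice between r and s* is weakly oriented by every profile in 𝒫. -/
namespace SepDemo

/-- A universe of separations: a finite lattice with an order-reversing involution. -/
structure SepUniverse (U : Type*) [Lattice U] [Fintype U] where
  inv : U → U
  inv_inv : ∀ s, inv (inv s) = s
  le_iff : ∀ r s : U, r ≤ s ↔ inv s ≤ inv r

/-- A submodular universe: a universe with a submodular order function. -/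
structure SubmodUniverse (U : Type*) [Lattice U] [Fintype U] extends SepUniverse U where
  ord : U → ℕ
  ord_inv : ∀ s, ord (inv s) = ord s
  submod : ∀ s t : U, ord (s ⊔ t) + ord (s ⊓ t) ≤ ord s + ord t

variable {U : Type*} [Lattice U] [Fintype U]

/-- A separation system inside a universe: a subset closed under the involution. -/
def SepSystem (𝒰 : SepUniverse U) (S : Set U) : Prop :=
  ∀ s ∈ S, 𝒰.inv s ∈ S

/-- An orientation of `S`: contains, for each `s ∈ S`, exactly one of `s`, `s*`
(just `s` itself if `s` is degenerate). -/
def IsOrientation (𝒰 : SepUniverse U) (S O : Set U) : Prop :=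
  O ⊆ S ∧ ∀ s ∈ S, (s ∈ O ∨ 𝒰.inv s ∈ O) ∧ (s ∈ O → 𝒰.inv s ∈ O → s = 𝒰.inv s)

/-- Consistency: no `r, s ∈ O` with `{r,r*} ≠ {s,s*}` and `r* ≤ s`. -/
def Consistent (𝒰 : SepUniverse U) (O : Set U) : Prop :=
  ∀ r ∈ O, ∀ s ∈ O, ({r, 𝒰.inv r} : Set U) ≠ ({s, 𝒰.inv s} : Set U) → ¬ 𝒰.inv r ≤ s

/-- A profile of `S`: a consistent orientation satisfying the profile property. -/
def IsProfile (𝒰 : SepUniverse U) (S P : Set U) : Prop :=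
  IsOrientation 𝒰 S P ∧ Consistent 𝒰 P ∧ ∀ r ∈ P, ∀ s ∈ P, 𝒰.inv (r ⊔ s) ∉ P

/-- Regular: contains no cosmall separation. -/
def Regular (𝒰 : SepUniverse U) (P : Set U) : Prop :=
  ∀ s ∈ P, ¬ 𝒰.inv s ≤ s

/-- Two separations are nested. -/
def Nested (𝒰 : SepUniverse U) (r s : U) : Prop :=
  r ≤ s ∨ r ≤ 𝒰.inv s ∨ 𝒰.inv r ≤ s ∨ 𝒰.inv r ≤ 𝒰.inv s

/-- A set of separations is nested if its members are pairwise nested. -/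
def NestedSet (𝒰 : SepUniverse U) (N : Set U) : Prop :=
  ∀ r ∈ N, ∀ s ∈ N, Nested 𝒰 r s

/-- `s` distinguishes the orientations `O₁` and `O₂`. -/
def Distinguishes (𝒰 : SepUniverse U) (s : U) (O₁ O₂ : Set U) : Prop :=
  (s ∈ O₁ ∧ 𝒰.inv s ∈ O₂) ∨ (𝒰.inv s ∈ O₁ ∧ s ∈ O₂)

/-- Two orientations are distinguishable. -/
def Distinguishable (𝒰 : SepUniverse U) (P Q : Set U) : Prop :=
  ∃ s : U, Distinguishes 𝒰 s P Q

/-- Structural submodularity of a separation system. -/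
def StructSubmodular (S : Set U) : Prop :=
  ∀ s ∈ S, ∀ t ∈ S, s ⊔ t ∈ S ∨ s ⊓ t ∈ S

/-- `s` is trivial in `S`. -/
def IsTrivialIn (𝒰 : SepUniverse U) (S : Set U) (s : U) : Prop :=
  ∃ r ∈ S, ({r, 𝒰.inv r} : Set U) ≠ ({s, 𝒰.inv s} : Set U) ∧ s ≤ r ∧ s ≤ 𝒰.inv r

/-- A star of separations. -/
def IsStar (𝒰 : SepUniverse U) (σ : Set U) : Prop :=
  ∀ r ∈ σ, ∀ s ∈ σ, r ≠ s → r ≤ 𝒰.inv s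

/-- The shift `σ_x^{s₀}` of a star `σ` at `x ∈ σ` to `s₀`. -/
def shiftStar (𝒰 : SepUniverse U) (σ : Set U) (x s₀ : U) : Set U :=
  insert (x ⊔ s₀) ((fun y => y ⊓ 𝒰.inv s₀) '' (σ \ {x}))

/-- `s₀` emulates `r` in `S`. -/
def Emulates (𝒰 : SepUniverse U) (S : Set U) (s₀ r : U) : Prop :=
  r ≤ s₀ ∧ ∀ t ∈ S, t ≠ 𝒰.inv r → r ≤ t → t ⊔ s₀ ∈ S

/-- `s₀` emulates `r` in `S` for a set `F` of stars. -/
def EmulatesFor (𝒰 : SepUniverse U) (S : Set U) (F : Set (Set U)) (s₀ r : U) : Prop :=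
  Emulates 𝒰 S s₀ r ∧
    ∀ σ ∈ F, 𝒰.inv r ∉ σ → ∀ x ∈ σ, r ≤ x → shiftStar 𝒰 σ x s₀ ∈ F

/-- `F` forces `s`. -/
def Forces (𝒰 : SepUniverse U) (F : Set (Set U)) (s : U) : Prop :=
  ({𝒰.inv s} : Set U) ∈ F

/-- `S` is `F`-separable. -/
def FSeparable (𝒰 : SepUniverse U) (S : Set U) (F : Set (Set U)) : Prop :=
  ∀ r₁ ∈ S, ∀ r₂ ∈ S,
    ¬ IsTrivialIn 𝒰 S r₁ → ¬ IsTrivialIn 𝒰 S r₂ →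
    r₁ ≠ 𝒰.inv r₁ → r₂ ≠ 𝒰.inv r₂ →
    ¬ Forces 𝒰 F r₁ → ¬ Forces 𝒰 F r₂ →
    r₁ ≤ 𝒰.inv r₂ →
    ∃ s₀ ∈ S, r₁ ≤ s₀ ∧ s₀ ≤ 𝒰.inv r₂ ∧
      EmulatesFor 𝒰 S F s₀ r₁ ∧ EmulatesFor 𝒰 S F (𝒰.inv s₀) r₂

/-- `r` is `F`-critical. -/
def FCritical (𝒰 : SepUniverse U) (F : Set (Set U)) (r : U) : Prop :=
  (∃ σ ∈ F, r ∈ σ) ∧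
    ¬ ∃ σ' ∈ F, σ' ∩ ({r, 𝒰.inv r} : Set U) = ({𝒰.inv r} : Set U)

/-- `S` is critically `F`-separable. -/
def CritFSeparable (𝒰 : SepUniverse U) (S : Set U) (F : Set (Set U)) : Prop :=
  ∀ r₁ ∈ S, ∀ r₂ ∈ S, FCritical 𝒰 F r₁ → FCritical 𝒰 F r₂ → r₁ ≤ 𝒰.inv r₂ →
    ∃ s₀ ∈ S, EmulatesFor 𝒰 S F s₀ r₁ ∧ EmulatesFor 𝒰 S F (𝒰.inv s₀) r₂

/-- An `F`-tangle of `S`: a consistent orientation including no member of `F`. -/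
def FTangle (𝒰 : SepUniverse U) (S : Set U) (F : Set (Set U)) (O : Set U) : Prop :=
  IsOrientation 𝒰 S O ∧ Consistent 𝒰 O ∧ ∀ σ ∈ F, ¬ σ ⊆ O

/-- `F` is standard for `S`: it forces all trivial separations of `S`. -/
def StandardFor (𝒰 : SepUniverse U) (S : Set U) (F : Set (Set U)) : Prop :=
  ∀ r ∈ S, IsTrivialIn 𝒰 S r → ({𝒰.inv r} : Set U) ∈ F

/-- An `S`-tree: a finite tree together with edge labels in `S` commuting with
the involution. -/
structure STree (𝒰 : SepUniverse U) (S : Set U) where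
  V : Type
  fintypeV : Fintype V
  G : SimpleGraph V
  isTree : G.IsTree
  label : V → V → U
  label_mem : ∀ x y, G.Adj x y → label x y ∈ S
  label_inv : ∀ x y, G.Adj x y → label y x = 𝒰.inv (label x y)

namespace STree

variable {𝒰 : SepUniverse U} {S : Set U}

/-- The star `α(t)` associated with a node `t`. -/
def nodeStar (T : STree 𝒰 S) (t : T.V) : Set U :=
  {u | ∃ s, T.G.Adj s t ∧ T.label s t = u}

/-- The `S`-tree is over `F`. -/
def Over (T : STree 𝒰 S) (F : Set (Set U)) : Prop :=
  ∀ t : T.V, T.nodeStar t ∈ F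

/-- Irredundance of an `S`-tree. -/
def Irredundant (T : STree 𝒰 S) : Prop :=
  ∀ t t' t'' : T.V, T.G.Adj t' t → T.G.Adj t'' t → t' ≠ t'' →
    T.label t' t ≠ T.label t'' t

/-- The set of edge labels of the tree. -/
def labels (T : STree 𝒰 S) : Set U :=
  {u | ∃ x y, T.G.Adj x y ∧ T.label x y = u}

/-- `t` is a sink of the orientation of the tree induced by `P`. -/
def IsSinkOf (T : STree 𝒰 S) (P : Set U) (t : T.V) : Prop :=
  ∀ s, T.G.Adj s t → T.label s t ∈ P

/-- The degree of a node. -/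
noncomputable def deg (T : STree 𝒰 S) (t : T.V) : ℕ :=
  (T.G.neighborSet t).ncard

/-- The maximum degree of the tree. -/
noncomputable def maxDeg (T : STree 𝒰 S) : ℕ :=
  sSup {n | ∃ t : T.V, T.deg t = n}

end STree

/-- A tree of tangles for `S`: an irredundant `S`-tree whose edge labels
distinguish every two distinct regular profiles of `S`. -/
def TreeOfTangles (𝒰 : SepUniverse U) (S : Set U) (T : STree 𝒰 S) : Prop :=
  T.Irredundant ∧
    ∀ P Q : Set U, IsProfile 𝒰 S P → Regular 𝒰 P → IsProfile 𝒰 S Q → Regular 𝒰 Q →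
      P ≠ Q → ∃ s ∈ T.labels, Distinguishes 𝒰 s P Q

/-- `δ(P)`: the minimum size of a subset of `P` distinguishing `P` from every
other regular profile of `S`. -/
noncomputable def deltaP (𝒰 : SepUniverse U) (S P : Set U) : ℕ :=
  sInf {n | ∃ D : Set U, D ⊆ P ∧ D.ncard = n ∧
    ∀ Q : Set U, IsProfile 𝒰 S Q → Regular 𝒰 Q → Q ≠ P →
      ∃ s ∈ D, Distinguishes 𝒰 s P Q}

/-- `S_k`: the separations of order less than `k`. -/
def Sk (𝒱 : SubmodUniverse U) (k : ℕ) : Set U := {s | 𝒱.ord s < k}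

/-- `s` distinguishes `P` and `Q` efficiently. -/
def EffDistinguishes (𝒱 : SubmodUniverse U) (s : U) (P Q : Set U) : Prop :=
  Distinguishes 𝒱.toSepUniverse s P Q ∧
    ∀ t : U, Distinguishes 𝒱.toSepUniverse t P Q → 𝒱.ord s ≤ 𝒱.ord t

/-- Property `Eff(P)` of a star `σ`. -/
def EffProp (𝒱 : SubmodUniverse U) (σ P : Set U) : Prop :=
  ¬ ∃ s ∈ σ, ∃ s' ∈ P, s ≤ s' ∧ 𝒱.ord s' < 𝒱.ord s

/-- `s` is a splice for `r`. -/
def SpliceFor (𝒱 : SubmodUniverse U) (s r : U) : Prop :=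
  r ≤ s ∧ ¬ ∃ t : U, r ≤ t ∧ t ≤ s ∧ 𝒱.ord t < 𝒱.ord s

/-- `s` is a splice between `r₁` and `r₂`. -/
def SpliceBetween (𝒱 : SubmodUniverse U) (s r₁ r₂ : U) : Prop :=
  r₁ ≤ s ∧ s ≤ r₂ ∧ ∀ t : U, r₁ ≤ t → t ≤ r₂ → 𝒱.ord s ≤ 𝒱.ord t

/-- The set `F_e` of stars in `S_k` included in at most one profile of `𝔓` and
satisfying `Eff(P)` whenever included in `P ∈ 𝔓`. -/
def Fe (𝒱 : SubmodUniverse U) (k : ℕ) (𝔓 : Set (Set U)) : Set (Set U) :=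
  {σ | σ ⊆ Sk 𝒱 k ∧ IsStar 𝒱.toSepUniverse σ ∧
    (∀ P ∈ 𝔓, ∀ Q ∈ 𝔓, σ ⊆ P → σ ⊆ Q → P = Q) ∧
    (∀ P ∈ 𝔓, σ ⊆ P → EffProp 𝒱 σ P)}

/-- `δ_e(P)`: the minimum size of a star `σ ⊆ P` with `Eff(P)` such that every
other regular profile of `S_k` contains the inverse of some element of `σ`. -/
noncomputable def deltaE (𝒱 : SubmodUniverse U) (k : ℕ) (P : Set U) : ℕ :=
  sInf {n | ∃ σ : Set U, σ ⊆ P ∧ IsStar 𝒱.toSepUniverse σ ∧ EffProp 𝒱 σ P ∧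
    σ.ncard = n ∧
    ∀ Q : Set U, IsProfile 𝒱.toSepUniverse (Sk 𝒱 k) Q → Regular 𝒱.toSepUniverse Q →
      Q ≠ P → ∃ s ∈ σ, 𝒱.inv s ∈ Q}

/-- `δ_{e,max}`: maximum of `δ_e` over all regular profiles of `S_k`. -/
noncomputable def deltaEMax (𝒱 : SubmodUniverse U) (k : ℕ) : ℕ :=
  sSup {n | ∃ P : Set U, IsProfile 𝒱.toSepUniverse (Sk 𝒱 k) P ∧
    Regular 𝒱.toSepUniverse P ∧ deltaE 𝒱 k P = n}

/-- `P` is a profile in `U`: a `k`-profile for some `k`. -/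
def ProfileIn (𝒱 : SubmodUniverse U) (P : Set U) : Prop :=
  ∃ k : ℕ, IsProfile 𝒱.toSepUniverse (Sk 𝒱 k) P

/-- Strong robustness of a profile. -/
def StronglyRobust (𝒱 : SubmodUniverse U) (P : Set U) : Prop :=
  ∀ s ∈ P, ∀ r : U, 𝒱.ord (s ⊔ r) ≤ 𝒱.ord s → 𝒱.ord (s ⊔ 𝒱.inv r) ≤ 𝒱.ord s →
    (s ⊔ r ∈ P ∨ s ⊔ 𝒱.inv r ∈ P)

/-- `O` weakly orients a separation as `s'` if `s' ≤ r` for some `r ∈ O`. -/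
def WeaklyOrientsAs (O : Set U) (s' : U) : Prop :=
  ∃ r ∈ O, s' ≤ r

/-- `O` weakly orients `s` (as `s` or as `s*`). -/
def WeaklyOrients (𝒰 : SepUniverse U) (O : Set U) (s : U) : Prop :=
  WeaklyOrientsAs O s ∨ WeaklyOrientsAs O (𝒰.inv s)

/-- The set `F_d` of stars, relative to the set of profiles `𝔓`. -/
def Fd (𝒱 : SubmodUniverse U) (𝔓 : Set (Set U)) : Set (Set U) :=
  {σ | IsStar 𝒱.toSepUniverse σ ∧
    (∀ P ∈ 𝔓, ∀ Q ∈ 𝔓, σ ⊆ P → σ ⊆ Q → P = Q) ∧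
    (∀ P ∈ 𝔓, ¬ σ ⊆ P → ∃ s ∈ σ, WeaklyOrientsAs P (𝒱.inv s)) ∧
    (∀ P ∈ 𝔓, σ ⊆ P → EffProp 𝒱 σ P)}

/-!
If `r` is critical, some profile `Q ∈ 𝔓` contains `r*` and has no element of smaller order
above `r*`. Otherwise, take for each profile that does not weakly orient `r` as `r` a maximal
element among those of least order above `r*`; its order is then less than `|r|`. By submodularity
and strong robustness, any two of these elements are comparable or have inverses that form a star.
Hence the inverses of the minimal ones form (up to one degenerate case) a star `T` of separations
below `r` of smaller order, and `T` together with `r*` is a star in `F_d` that contains `r*` but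
not `r`.

Now let `t` be a splice between `r` and `s*` and suppose that `P ∈ 𝔓`, containing some `p ≥ s`,
does not weakly orient `t`. Then `|p| < |t|`, so uncrossing `r` with `p*` gives `|r ⊓ p*| < |r|`,
and uncrossing `p` with `t` by strong robustness gives `|r ⊓ p| < |r|`. But `Q` orients `p`, so one
of `r* ⊔ p` and `r* ⊔ p*` lies in `Q`, is above `r*` and has smaller order than `r*`.
-/

namespace SepUniverse

variable (𝒰 : SepUniverse U) {a b : U}

lemma le_inv_comm : a ≤ 𝒰.inv b ↔ b ≤ 𝒰.inv a := by
  rw [𝒰.le_iff, 𝒰.inv_inv]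

lemma inv_le_comm : 𝒰.inv a ≤ b ↔ 𝒰.inv b ≤ a := by
  rw [𝒰.le_iff, 𝒰.inv_inv]

lemma inv_sup (a b : U) : 𝒰.inv (a ⊔ b) = 𝒰.inv a ⊓ 𝒰.inv b :=
  eq_of_forall_le_iff fun c => by
    rw [𝒰.le_inv_comm, sup_le_iff, le_inf_iff, 𝒰.le_inv_comm, 𝒰.le_inv_comm (a := b)]

end SepUniverse

lemma SubmodUniverse.ord_inv_sup (𝒱 : SubmodUniverse U) (a b : U) :
    𝒱.ord (𝒱.inv a ⊔ b) = 𝒱.ord (a ⊓ 𝒱.inv b) := by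
  rw [← 𝒱.ord_inv, 𝒱.inv_sup, 𝒱.inv_inv]

section Stars

variable {𝒰 : SepUniverse U}

lemma IsStar.insert {σ : Set U} {x : U} (hσ : IsStar 𝒰 σ) (hx : ∀ y ∈ σ, y ≤ 𝒰.inv x) :
    IsStar 𝒰 (insert x σ) := by
  rintro a (rfl | ha) b (rfl | hb) hab
  · exact absurd rfl hab
  · exact 𝒰.le_inv_comm.1 (hx b hb)
  · exact hx a ha
  · exact hσ a ha b hb hab

lemma isStar_pair_inv (x : U) : IsStar 𝒰 {x, 𝒰.inv x} :=
  IsStar.insert (fun _ ha _ hb hab => absurd (ha.trans hb.symm) hab) fun _ hy => le_of_eq hy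

lemma isStar_setOf_minimal_inv {C : Set U}
    (hC : ∀ p ∈ C, ∀ q ∈ C, p ≤ q ∨ q ≤ p ∨ 𝒰.inv q ≤ p) :
    IsStar 𝒰 {y | Minimal (· ∈ C) (𝒰.inv y)} := by
  have inv_injective : Function.Injective 𝒰.inv := Function.LeftInverse.injective 𝒰.inv_inv
  intro a ha b hb hab
  rcases hC _ hb.1 _ ha.1 with h | h | h
  · exact absurd (inv_injective (ha.eq_of_le hb.1 h).symm) hab
  · exact absurd (inv_injective (hb.eq_of_le ha.1 h)) hab
  · rwa [𝒰.inv_inv] at h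

/-- Inverting the minimal elements of `C` gives the star, unless one of them has its inverse in `C`;
then it and its inverse already form the star. -/
lemma exists_isStar_inv_coinitial {C : Set U}
    (hC : ∀ p ∈ C, ∀ q ∈ C, p ≤ q ∨ q ≤ p ∨ 𝒰.inv q ≤ p) :
    ∃ T, IsStar 𝒰 T ∧ (∀ y ∈ T, 𝒰.inv y ∈ C) ∧ (∀ q ∈ C, ∃ y ∈ T, 𝒰.inv y ≤ q) ∧
      ∀ y ∈ T, y ∈ C → 𝒰.inv y ∈ T := by
  by_cases hsymm : ∃ q ∈ C, Minimal (· ∈ C) (𝒰.inv q)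
  · obtain ⟨q, hq, hmin⟩ := hsymm
    refine ⟨{q, 𝒰.inv q}, isStar_pair_inv q, ?_, fun p hp => ?_, ?_⟩
    · rintro y (rfl | rfl)
      exacts [hmin.1, (𝒰.inv_inv q).symm ▸ hq]
    · have hcomp : 𝒰.inv q ≤ p ∨ q ≤ p := by
        rcases hC p hp _ hmin.1 with h | h | h
        · exact Or.inl (hmin.2 hp h)
        · exact Or.inl h
        · exact Or.inr (by rwa [𝒰.inv_inv] at h)
      rcases hcomp with h | h
      · exact ⟨q, Or.inl rfl, h⟩
      · exact ⟨𝒰.inv q, Or.inr rfl, by rwa [𝒰.inv_inv]⟩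
    · rintro y (rfl | rfl) -
      exacts [Or.inr rfl, Or.inl (𝒰.inv_inv q)]
  · refine ⟨_, isStar_setOf_minimal_inv hC, fun y hy => hy.1, fun q hq => ?_,
      fun y hy hyC => absurd ⟨y, hyC, hy⟩ hsymm⟩
    obtain ⟨m, hmq, hm⟩ := (Set.toFinite C).exists_le_minimal hq
    exact ⟨𝒰.inv m, by rwa [Set.mem_ofPred_eq, 𝒰.inv_inv], by rwa [𝒰.inv_inv]⟩

end Stars

namespace FCritical

variable {𝒰 : SepUniverse U} {F : Set (Set U)} {r : U}

lemma ne_inv (hr : FCritical 𝒰 F r) : r ≠ 𝒰.inv r := by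
  intro h
  obtain ⟨⟨σ, hσ, hrσ⟩, hcrit⟩ := hr
  exact hcrit ⟨σ, hσ, by rw [← h, Set.pair_eq_singleton, Set.inter_singleton_of_mem hrσ]⟩

lemma mem_of_inv_mem (hr : FCritical 𝒰 F r) {σ : Set U} (hσ : σ ∈ F) (h : 𝒰.inv r ∈ σ) :
    r ∈ σ := by
  by_contra hrσ
  exact hr.2 ⟨σ, hσ, by
    rw [Set.inter_insert_of_notMem hrσ, Set.inter_singleton_of_mem h]⟩

end FCritical

namespace IsProfile

section SepUniverse

variable {𝒰 : SepUniverse U} {S P : Set U} {a b : U}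

lemma mem_or_inv_mem (hP : IsProfile 𝒰 S P) (ha : a ∈ S) : a ∈ P ∨ 𝒰.inv a ∈ P :=
  (hP.1.2 a ha).1

lemma weaklyOrients (hP : IsProfile 𝒰 S P) (ha : a ∈ S) : WeaklyOrients 𝒰 P a :=
  (hP.mem_or_inv_mem ha).imp (⟨a, ·, le_rfl⟩) (⟨𝒰.inv a, ·, le_rfl⟩)

lemma inv_notMem (hP : IsProfile 𝒰 S P) (ha : a ∈ P) : 𝒰.inv a ∉ P :=
  sup_idem a ▸ hP.2.2 a ha a ha

lemma sup_mem (hP : IsProfile 𝒰 S P) (ha : a ∈ P) (hb : b ∈ P) (h : a ⊔ b ∈ S) : a ⊔ b ∈ P :=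
  (hP.mem_or_inv_mem h).resolve_right (hP.2.2 a ha b hb)

lemma eq_of_inv_le (hP : IsProfile 𝒰 S P) (ha : a ∈ P) (hb : b ∈ P) (h : 𝒰.inv b ≤ a) :
    a = b := by
  by_contra hne
  refine hP.2.1 b hb a ha (fun heq => ?_) h
  have hmem : a ∈ ({b, 𝒰.inv b} : Set U) := heq ▸ Set.mem_insert _ _
  rcases hmem with rfl | rfl
  · exact hne rfl
  · exact hP.inv_notMem hb ha

lemma eq_inv_of_le (hP : IsProfile 𝒰 S P) (ha : a ∈ P) (hb : 𝒰.inv b ∈ P) (h : b ≤ a) :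
    b = 𝒰.inv a := by
  rw [hP.eq_of_inv_le ha hb (by rwa [𝒰.inv_inv]), 𝒰.inv_inv]

end SepUniverse

variable {𝒱 : SubmodUniverse U} {k : ℕ} {P : Set U} {a b : U}

lemma ord_lt (hP : IsProfile 𝒱.toSepUniverse (Sk 𝒱 k) P) (ha : a ∈ P) : 𝒱.ord a < k :=
  hP.1.1 ha

lemma mem_of_le_of_ord_lt (hP : IsProfile 𝒱.toSepUniverse (Sk 𝒱 k) P) (ha : a ∈ P) (h : b ≤ a)
    (hlt : 𝒱.ord b < 𝒱.ord a) : b ∈ P := by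
  refine (hP.mem_or_inv_mem (hlt.trans (hP.ord_lt ha))).resolve_right fun hb => hlt.ne ?_
  rw [hP.eq_inv_of_le ha hb h, 𝒱.ord_inv]

end IsProfile

/-- `q` is an efficient cover of `x` in `Q`: an element of `Q` above `x` of least order. In
particular, `IsEffCover 𝒱 Q x x` says that `x ∈ Q` and that `{x}` has property `Eff(Q)`. -/
structure IsEffCover (𝒱 : SubmodUniverse U) (Q : Set U) (x q : U) : Prop where
  mem : q ∈ Q
  le : x ≤ q
  ord_le : ∀ z ∈ Q, x ≤ z → 𝒱.ord q ≤ 𝒱.ord z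

section EffCover

variable {𝒱 : SubmodUniverse U} {Q : Set U} {x q z : U} {k : ℕ}

lemma exists_maximal_isEffCover (h : WeaklyOrientsAs Q x) :
    ∃ q, Maximal (IsEffCover 𝒱 Q x) q := by
  obtain ⟨z, hz, hxz⟩ := h
  obtain ⟨m, ⟨hm, hxm⟩, hmin⟩ := Set.exists_min_image {z | z ∈ Q ∧ x ≤ z} 𝒱.ord
    (Set.toFinite _) ⟨z, hz, hxz⟩
  exact (Set.toFinite {q | IsEffCover 𝒱 Q x q}).exists_maximal
    ⟨m, hm, hxm, fun z hz hxz => hmin z ⟨hz, hxz⟩⟩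

namespace IsEffCover

lemma mono (hq : IsEffCover 𝒱 Q x q) (hz : z ∈ Q) (hxz : x ≤ z) (h : 𝒱.ord z ≤ 𝒱.ord q) :
    IsEffCover 𝒱 Q x z :=
  ⟨hz, hxz, fun w hw hxw => h.trans (hq.ord_le w hw hxw)⟩

lemma ord_le_ord_sup (hq : IsEffCover 𝒱 Q x q) (hQ : IsProfile 𝒱.toSepUniverse (Sk 𝒱 k) Q)
    (hz : z ∈ Q) : 𝒱.ord q ≤ 𝒱.ord (q ⊔ z) := by
  by_contra! hlt
  have hmem : q ⊔ z ∈ Q := hQ.sup_mem hq.mem hz (hlt.trans (hQ.ord_lt hq.mem))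
  exact hlt.not_ge (hq.ord_le _ hmem (hq.le.trans le_sup_left))

lemma ord_sup_le (hq : IsEffCover 𝒱 Q x q) (hQ : IsProfile 𝒱.toSepUniverse (Sk 𝒱 k) Q)
    (hxz : x ≤ z) : 𝒱.ord (q ⊔ z) ≤ 𝒱.ord z := by
  have hinf : 𝒱.ord q ≤ 𝒱.ord (q ⊓ z) := by
    by_contra! hlt
    have hmem : q ⊓ z ∈ Q := hQ.mem_of_le_of_ord_lt hq.mem inf_le_left hlt
    exact hlt.not_ge (hq.ord_le _ hmem (le_inf hq.le hxz))
  have := 𝒱.submod q z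
  omega

end IsEffCover

lemma le_of_maximal_isEffCover (hq : Maximal (IsEffCover 𝒱 Q x) q) (hmem : q ⊔ z ∈ Q)
    (h : 𝒱.ord (q ⊔ z) ≤ 𝒱.ord q) : z ≤ q :=
  le_sup_right.trans
    (hq.2 (hq.1.mono hmem (hq.1.le.trans le_sup_left) h) le_sup_left)

lemma isEffCover_inv_self_of_weaklyOrientsAs (hQ : IsProfile 𝒱.toSepUniverse (Sk 𝒱 k) Q)
    (hx : 𝒱.inv x ∈ Q) (hw : WeaklyOrientsAs Q x) :
    IsEffCover 𝒱 Q (𝒱.inv x) (𝒱.inv x) := by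
  obtain ⟨z, hz, hxz⟩ := hw
  have hx_small : x ≤ 𝒱.inv x := by
    rwa [hQ.eq_inv_of_le hz hx hxz, 𝒱.inv_inv, ← hQ.eq_inv_of_le hz hx hxz]
  refine ⟨hx, le_rfl, fun q hq hxq => ?_⟩
  rw [hQ.eq_inv_of_le hq hx (hx_small.trans hxq), 𝒱.inv_inv]

lemma isEffCover_inv_self_of_ord_le (hQ : IsProfile 𝒱.toSepUniverse (Sk 𝒱 k) Q)
    (hx : x ∉ Q) (hq : IsEffCover 𝒱 Q (𝒱.inv x) q) (hle : 𝒱.ord x ≤ 𝒱.ord q) :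
    IsEffCover 𝒱 Q (𝒱.inv x) (𝒱.inv x) := by
  have hmem : 𝒱.inv x ∈ Q :=
    (hQ.mem_or_inv_mem (hle.trans_lt (hQ.ord_lt hq.mem))).resolve_left hx
  exact hq.mono hmem le_rfl (by rwa [𝒱.ord_inv])

variable {Q₁ Q₂ : Set U} {q₁ q₂ : U}

lemma le_or_le_or_inv_le_of_ord_le (hQ₁ : IsProfile 𝒱.toSepUniverse (Sk 𝒱 k) Q₁)
    (hrob : StronglyRobust 𝒱 Q₂)
    (hq₁ : Maximal (IsEffCover 𝒱 Q₁ x) q₁) (hq₂ : Maximal (IsEffCover 𝒱 Q₂ x) q₂)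
    (hle : 𝒱.ord q₂ ≤ 𝒱.ord q₁) : q₁ ≤ q₂ ∨ q₂ ≤ q₁ ∨ 𝒱.inv q₂ ≤ q₁ := by
  have le_q₁ {z : U} (hz : z ∈ Q₁) (h : 𝒱.ord (q₁ ⊔ z) ≤ 𝒱.ord q₁) : z ≤ q₁ :=
    le_of_maximal_isEffCover hq₁
      (hQ₁.sup_mem hq₁.1.mem hz (h.trans_lt (hQ₁.ord_lt hq₁.1.mem))) h
  have hsup : 𝒱.ord (q₁ ⊔ q₂) ≤ 𝒱.ord q₂ := hq₁.1.ord_sup_le hQ₁ hq₂.1.le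
  rcases hQ₁.mem_or_inv_mem (hle.trans_lt (hQ₁.ord_lt hq₁.1.mem)) with hmem | hmem
  · exact Or.inr (Or.inl (le_q₁ hmem (hsup.trans hle)))
  by_cases hinv : 𝒱.ord (q₁ ⊔ 𝒱.inv q₂) ≤ 𝒱.ord q₁
  · exact Or.inr (Or.inr (le_q₁ hmem hinv))
  left
  rw [sup_comm] at hsup
  have hcorner : 𝒱.ord (q₂ ⊔ 𝒱.inv q₁) < 𝒱.ord q₂ := by
    have := 𝒱.submod q₁ (𝒱.inv q₂)
    rw [← 𝒱.ord_inv_sup, sup_comm (𝒱.inv q₁), 𝒱.ord_inv] at this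
    omega
  rcases hrob q₂ hq₂.1.mem q₁ hsup hcorner.le with h | h
  · exact le_of_maximal_isEffCover hq₂ h hsup
  · exact absurd (hq₂.1.ord_le _ h (hq₂.1.le.trans le_sup_left)) hcorner.not_ge

lemma le_or_le_or_inv_le_of_maximal_isEffCover
    (hQ₁ : ProfileIn 𝒱 Q₁ ∧ StronglyRobust 𝒱 Q₁) (hQ₂ : ProfileIn 𝒱 Q₂ ∧ StronglyRobust 𝒱 Q₂)
    (hq₁ : Maximal (IsEffCover 𝒱 Q₁ x) q₁) (hq₂ : Maximal (IsEffCover 𝒱 Q₂ x) q₂) :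
    q₁ ≤ q₂ ∨ q₂ ≤ q₁ ∨ 𝒱.inv q₂ ≤ q₁ := by
  obtain ⟨⟨k₁, hP₁⟩, hrob₁⟩ := hQ₁
  obtain ⟨⟨k₂, hP₂⟩, hrob₂⟩ := hQ₂
  rcases le_total (𝒱.ord q₂) (𝒱.ord q₁) with h | h
  · exact le_or_le_or_inv_le_of_ord_le hP₁ hrob₂ hq₁ hq₂ h
  · rw [𝒱.inv_le_comm, or_left_comm]
    exact le_or_le_or_inv_le_of_ord_le hP₂ hrob₁ hq₂ hq₁ h

end EffCover

section Critical

variable {𝒱 : SubmodUniverse U} {𝔓 : Set (Set U)} {r : U}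

lemma weaklyOrients_of_mem_Fd {σ P : Set U} (hσ : σ ∈ Fd 𝒱 𝔓) (hr : r ∈ σ) (hP : P ∈ 𝔓) :
    WeaklyOrients 𝒱.toSepUniverse P r := by
  obtain ⟨hstar, -, horient, -⟩ := hσ
  by_cases hσP : σ ⊆ P
  · exact Or.inl ⟨r, hσP hr, le_rfl⟩
  · obtain ⟨x, hx, z, hz, hxz⟩ := horient P hP hσP
    rcases eq_or_ne r x with rfl | hrx
    · exact Or.inr ⟨z, hz, hxz⟩
    · exact Or.inl ⟨z, hz, (hstar r hr x hx hrx).trans hxz⟩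

lemma mem_Fd_of_forall_not_subset {σ : Set U} (hσ : IsStar 𝒱.toSepUniverse σ)
    (hsub : ∀ P ∈ 𝔓, ¬ σ ⊆ P) (horient : ∀ P ∈ 𝔓, ∃ s ∈ σ, WeaklyOrientsAs P (𝒱.inv s)) :
    σ ∈ Fd 𝒱 𝔓 :=
  ⟨hσ, fun P hP _ _ h => absurd h (hsub P hP), fun P hP _ => horient P hP,
    fun P hP h => absurd h (hsub P hP)⟩

/-- The maximal efficient covers of `r*` in the profiles of `𝔓` that do not weakly orient `r` as
`r`. -/
def maxEffCovers (𝒱 : SubmodUniverse U) (𝔓 : Set (Set U)) (r : U) : Set U :=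
  {q | ∃ Q ∈ 𝔓, ¬ WeaklyOrientsAs Q r ∧ Maximal (IsEffCover 𝒱 Q (𝒱.inv r)) q}

lemma ord_lt_of_mem_maxEffCovers {q : U} (h𝔓 : ∀ P ∈ 𝔓, ProfileIn 𝒱 P)
    (hself : ∀ Q ∈ 𝔓, ¬ IsEffCover 𝒱 Q (𝒱.inv r) (𝒱.inv r)) (hq : q ∈ maxEffCovers 𝒱 𝔓 r) :
    𝒱.ord q < 𝒱.ord r := by
  obtain ⟨Q, hQ, hrQ, hq⟩ := hq
  obtain ⟨k, hP⟩ := h𝔓 Q hQ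
  by_contra! hle
  exact hself Q hQ
    (isEffCover_inv_self_of_ord_le hP (fun h => hrQ ⟨r, h, le_rfl⟩) hq.1 hle)

lemma exists_mem_maxEffCovers {Q : Set U} (hQ : Q ∈ 𝔓) (hr : WeaklyOrients 𝒱.toSepUniverse Q r)
    (hrQ : ¬ WeaklyOrientsAs Q r) : ∃ q ∈ maxEffCovers 𝒱 𝔓 r, q ∈ Q := by
  obtain ⟨q, hq⟩ := exists_maximal_isEffCover (𝒱 := 𝒱) (hr.resolve_left hrQ)
  exact ⟨q, ⟨Q, hQ, hrQ, hq⟩, hq.1.mem⟩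

lemma exists_insert_inv_mem_Fd (h𝔓 : ∀ P ∈ 𝔓, ProfileIn 𝒱 P ∧ StronglyRobust 𝒱 P)
    (hr : ∀ P ∈ 𝔓, WeaklyOrients 𝒱.toSepUniverse P r)
    (hself : ∀ Q ∈ 𝔓, ¬ IsEffCover 𝒱 Q (𝒱.inv r) (𝒱.inv r)) :
    ∃ T, insert (𝒱.inv r) T ∈ Fd 𝒱 𝔓 ∧ r ∉ T := by
  have hcross : ∀ p ∈ maxEffCovers 𝒱 𝔓 r, ∀ q ∈ maxEffCovers 𝒱 𝔓 r,
      p ≤ q ∨ q ≤ p ∨ 𝒱.inv q ≤ p := by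
    rintro p ⟨P, hP, -, hp⟩ q ⟨Q, hQ, -, hq⟩
    exact le_or_le_or_inv_le_of_maximal_isEffCover (h𝔓 P hP) (h𝔓 Q hQ) hp hq
  obtain ⟨T, hT, hTC, hcover, hsymm⟩ := exists_isStar_inv_coinitial hcross
  refine ⟨T, mem_Fd_of_forall_not_subset (hT.insert fun y hy => ?_) (fun Q hQ hsub => ?_)
    (fun Q hQ => ?_), fun hrT => ?_⟩
  · obtain ⟨Q, -, -, hq⟩ := hTC y hy
    rw [𝒱.inv_inv, 𝒱.le_iff]
    exact hq.1.le
  · obtain ⟨k, hP⟩ := (h𝔓 Q hQ).1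
    have hrQ : ¬ WeaklyOrientsAs Q r := fun h =>
      hself Q hQ (isEffCover_inv_self_of_weaklyOrientsAs hP (hsub (Set.mem_insert _ _)) h)
    obtain ⟨q, hq, hqQ⟩ := exists_mem_maxEffCovers hQ (hr Q hQ) hrQ
    obtain ⟨y, hy, hyq⟩ := hcover q hq
    obtain rfl : q = y := hP.eq_of_inv_le hqQ (hsub (Set.mem_insert_of_mem _ hy)) hyq
    exact hP.inv_notMem hqQ (hsub (Set.mem_insert_of_mem _ (hsymm q hy hq)))
  · by_cases hrQ : WeaklyOrientsAs Q r
    · exact ⟨𝒱.inv r, Set.mem_insert _ _, by rwa [𝒱.inv_inv]⟩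
    · obtain ⟨q, hq, hqQ⟩ := exists_mem_maxEffCovers hQ (hr Q hQ) hrQ
      obtain ⟨y, hy, hyq⟩ := hcover q hq
      exact ⟨y, Set.mem_insert_of_mem _ hy, q, hqQ, hyq⟩
  · have hlt := ord_lt_of_mem_maxEffCovers (fun P hP => (h𝔓 P hP).1) hself (hTC r hrT)
    exact hlt.ne (𝒱.ord_inv r)

lemma FCritical.exists_isEffCover_inv_self
    (hr : FCritical 𝒱.toSepUniverse (Fd 𝒱 𝔓) r)
    (h𝔓 : ∀ P ∈ 𝔓, ProfileIn 𝒱 P ∧ StronglyRobust 𝒱 P) :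
    ∃ Q ∈ 𝔓, IsEffCover 𝒱 Q (𝒱.inv r) (𝒱.inv r) := by
  by_contra! hself
  obtain ⟨σ, hσ, hrσ⟩ := hr.1
  obtain ⟨T, hTF, hrT⟩ :=
    exists_insert_inv_mem_Fd h𝔓 (fun P hP => weaklyOrients_of_mem_Fd hσ hrσ hP) hself
  exact (hr.mem_of_inv_mem hTF (Set.mem_insert _ _)).elim hr.ne_inv hrT

end Critical

lemma StronglyRobust.ord_lt_ord_sup {𝒱 : SubmodUniverse U} {P : Set U} {p t : U}
    (hrob : StronglyRobust 𝒱 P) (hp : p ∈ P) (ht : ¬ WeaklyOrients 𝒱.toSepUniverse P t)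
    (h : 𝒱.ord (p ⊔ 𝒱.inv t) ≤ 𝒱.ord p) : 𝒱.ord p < 𝒱.ord (p ⊔ t) := by
  by_contra! hle
  exact ht ((hrob p hp t hle h).imp (⟨_, ·, le_sup_right⟩) (⟨_, ·, le_sup_right⟩))

namespace SpliceBetween

variable {𝒱 : SubmodUniverse U} {a b c t : U}

lemma ord_inf_lt (ht : SpliceBetween 𝒱 t a b) (hc : c ≤ b) (hlt : 𝒱.ord c < 𝒱.ord t) :
    𝒱.ord (a ⊓ c) < 𝒱.ord a := by
  have hmin := ht.2.2 (a ⊔ c) le_sup_left (sup_le (ht.1.trans ht.2.1) hc)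
  have hsub := 𝒱.submod a c
  omega

lemma ord_inf_le (ht : SpliceBetween 𝒱 t a b) (hc : c ≤ b) : 𝒱.ord (c ⊓ t) ≤ 𝒱.ord c := by
  have hmin := ht.2.2 (c ⊔ t) (ht.1.trans le_sup_right) (sup_le hc ht.2.1)
  have hsub := 𝒱.submod c t
  omega

lemma ord_inf_lt_of_not_weaklyOrients {P : Set U} {p : U} (ht : SpliceBetween 𝒱 t a b)
    (hrob : StronglyRobust 𝒱 P) (hp : p ∈ P) (hpb : 𝒱.inv p ≤ b)
    (htP : ¬ WeaklyOrients 𝒱.toSepUniverse P t) : 𝒱.ord (a ⊓ p) < 𝒱.ord a := by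
  have hsup : 𝒱.ord (p ⊔ 𝒱.inv t) ≤ 𝒱.ord p := by
    rw [sup_comm, 𝒱.ord_inv_sup, inf_comm, ← 𝒱.ord_inv p]
    exact ht.ord_inf_le hpb
  have hcorner : 𝒱.ord (t ⊓ p) < 𝒱.ord t := by
    have hlt := hrob.ord_lt_ord_sup hp htP hsup
    have hsub := 𝒱.submod p t
    rw [inf_comm]
    omega
  calc 𝒱.ord (a ⊓ p) = 𝒱.ord (a ⊓ (t ⊓ p)) := by rw [← inf_assoc, inf_eq_left.2 ht.1]
    _ < 𝒱.ord a := ht.ord_inf_lt (inf_le_left.trans ht.2.1) hcorner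

end SpliceBetween

theorem critical_splice_weakly_oriented_general {𝒱 : SubmodUniverse U} {𝔓 : Set (Set U)}
    (h𝔓 : ∀ P ∈ 𝔓, ProfileIn 𝒱 P ∧ StronglyRobust 𝒱 P) {r s t : U}
    (hr : FCritical 𝒱.toSepUniverse (Fd 𝒱 𝔓) r) (ht : SpliceBetween 𝒱 t r (𝒱.inv s))
    {P : Set U} (hP : P ∈ 𝔓) (hs : WeaklyOrients 𝒱.toSepUniverse P s) :
    WeaklyOrients 𝒱.toSepUniverse P t := by
  rcases hs with ⟨p, hp, hsp⟩ | ⟨z, hz, hsz⟩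
  swap
  · exact Or.inl ⟨z, hz, ht.2.1.trans hsz⟩
  by_contra htP
  obtain ⟨Q, hQ, heff⟩ := hr.exists_isEffCover_inv_self h𝔓
  obtain ⟨⟨k, hPk⟩, hrob⟩ := h𝔓 P hP
  obtain ⟨l, hQl⟩ := (h𝔓 Q hQ).1
  have hpt : 𝒱.ord p < 𝒱.ord t :=
    (hPk.ord_lt hp).trans_le (not_lt.1 (mt hPk.weaklyOrients htP))
  have hps : 𝒱.inv p ≤ 𝒱.inv s := (𝒱.le_iff _ _).1 hsp
  have hcorner : 𝒱.ord (r ⊓ 𝒱.inv p) < 𝒱.ord r := ht.ord_inf_lt hps (by rwa [𝒱.ord_inv])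
  have hcorner' : 𝒱.ord (r ⊓ 𝒱.inv (𝒱.inv p)) < 𝒱.ord r := by
    rw [𝒱.inv_inv]
    exact ht.ord_inf_lt_of_not_weaklyOrients hrob hp hps htP
  have hpl : 𝒱.ord p < l := calc
    𝒱.ord p < 𝒱.ord t := hpt
    _ ≤ 𝒱.ord r := ht.2.2 r le_rfl (ht.1.trans ht.2.1)
    _ = 𝒱.ord (𝒱.inv r) := (𝒱.ord_inv r).symm
    _ < l := hQl.ord_lt heff.mem
  have hsup {c : U} (hc : c ∈ Q) : 𝒱.ord r ≤ 𝒱.ord (r ⊓ 𝒱.inv c) := by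
    rw [← 𝒱.ord_inv_sup, ← 𝒱.ord_inv r]
    exact heff.ord_le_ord_sup hQl hc
  exact (hQl.mem_or_inv_mem hpl).elim (hcorner.not_ge <| hsup ·) (hcorner'.not_ge <| hsup ·)

/-- In a distributive submodular universe with a set `𝔓` of
pairwise distinguishable strongly robust profiles, if `r` and `s` are
`F_d`-critical with `r ≤ s*`, then every splice between `r` and `s*` is weakly
oriented by every profile in `𝔓`. -/
theorem critical_splice_weakly_oriented {W : Type*} [DistribLattice W] [Fintype W]
    (𝒱 : SubmodUniverse W) (𝔓 : Set (Set W))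
    (h𝔓 : ∀ P ∈ 𝔓, ProfileIn 𝒱 P ∧ StronglyRobust 𝒱 P)
    (hdist : ∀ P ∈ 𝔓, ∀ Q ∈ 𝔓, P ≠ Q → Distinguishable 𝒱.toSepUniverse P Q)
    (r s : W) (hr : FCritical 𝒱.toSepUniverse (Fd 𝒱 𝔓) r)
    (hs : FCritical 𝒱.toSepUniverse (Fd 𝒱 𝔓) s)
    (hrs : r ≤ 𝒱.inv s)
    (t : W) (ht : SpliceBetween 𝒱 t r (𝒱.inv s)) :
    ∀ P ∈ 𝔓, WeaklyOrients 𝒱.toSepUniverse P t :=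
  fun _ hP =>
    let ⟨_, hσ, hsσ⟩ := hs.1
    critical_splice_weakly_oriented_general h𝔓 hr ht hP (weaklyOrients_of_mem_Fd hσ hsσ hP)

end SepDemo
end

section
/- Let U be a distributive submodular universe and 𝒫 a nonempty set of pairwise distinguishable strongly robust profiles in U. Then for every consistent orientation O of the separation system U itself there exists a star σ ∈ F_d with σ ⊆ O. -/
namespace SepDemo

variable {U : Type*} [Lattice U] [Fintype U]

/-!
Among the separations that efficiently distinguish two profiles of `𝔓`, submodularity and strong
robustness allow crossing pairs to be uncrossed: if `r` and `s` cross and `r` has the smaller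
order, then `r` itself or a corner of `r` and `s` efficiently distinguishes the pair of profiles
that `s` distinguishes. Uncrossing order by order yields a nested set `N`, closed under the
involution, which efficiently distinguishes all profiles of `𝔓` and each of whose members is
needed for some pair. The maximal elements of `N ∩ O` are the star at the node of the tree `N`
towards which `O` points, and this star lies in `F_d`: a member `s` of the star violating the
conditions for a profile `P` efficiently distinguishes some `Q` and `Q'`, and a separation `f` of
`N` distinguishing `P` from `Q` then has smaller order than `s`, so it cannot separate `Q` from
`Q'`, and hence lies on the far side of `s`.
-/

namespace SepUniverse

variable (𝒰 : SepUniverse U) {r s : U}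

theorem inv_le_inv_iff : 𝒰.inv r ≤ 𝒰.inv s ↔ s ≤ r :=
  (𝒰.le_iff s r).symm

theorem inv_le_comm_s16 : 𝒰.inv r ≤ s ↔ 𝒰.inv s ≤ r := by
  rw [𝒰.le_iff, 𝒰.inv_inv]

theorem le_inv_comm_s16 : r ≤ 𝒰.inv s ↔ s ≤ 𝒰.inv r := by
  rw [𝒰.le_iff, 𝒰.inv_inv]

theorem inv_sup_s16 (r s : U) : 𝒰.inv (r ⊔ s) = 𝒰.inv r ⊓ 𝒰.inv s :=
  le_antisymm
    (le_inf (𝒰.inv_le_inv_iff.2 le_sup_left) (𝒰.inv_le_inv_iff.2 le_sup_right))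
    (𝒰.le_inv_comm_s16.1 (sup_le (𝒰.le_inv_comm_s16.1 inf_le_left) (𝒰.le_inv_comm_s16.1 inf_le_right)))

end SepUniverse

theorem SubmodUniverse.ord_sup_add_ord_inv_sup_inv_le (𝒱 : SubmodUniverse U) (r s : U) :
    𝒱.ord (r ⊔ s) + 𝒱.ord (𝒱.inv r ⊔ 𝒱.inv s) ≤ 𝒱.ord r + 𝒱.ord s := by
  rw [← 𝒱.ord_inv (𝒱.inv r ⊔ 𝒱.inv s), 𝒱.inv_sup_s16, 𝒱.inv_inv, 𝒱.inv_inv]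
  exact 𝒱.submod r s

section Nested

variable {𝒰 : SepUniverse U} {r s t c : U}

theorem nested_inv_left : Nested 𝒰 (𝒰.inv r) s ↔ Nested 𝒰 r s := by
  simp only [Nested, 𝒰.inv_inv]
  tauto

theorem nested_inv_right : Nested 𝒰 r (𝒰.inv s) ↔ Nested 𝒰 r s := by
  simp only [Nested, 𝒰.inv_inv]
  tauto

theorem Nested.refl (r : U) : Nested 𝒰 r r :=
  Or.inl le_rfl

theorem Nested.symm (h : Nested 𝒰 r s) : Nested 𝒰 s r := by
  rcases h with h | h | h | h
  · exact Or.inr (Or.inr (Or.inr (𝒰.inv_le_inv_iff.2 h)))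
  · exact Or.inr (Or.inl (𝒰.le_inv_comm_s16.1 h))
  · exact Or.inr (Or.inr (Or.inl (𝒰.inv_le_comm_s16.1 h)))
  · exact Or.inl (𝒰.inv_le_inv_iff.1 h)

/-- The corners `r' ⊔ s'` of `r` and `s`, where `r'` and `s'` are orientations of `r` and `s`.
The corners `r' ⊓ s'` are their inverses and are left out. -/
def corners (𝒰 : SepUniverse U) (r s : U) : Set U :=
  Set.image2 (· ⊔ ·) {r, 𝒰.inv r} {s, 𝒰.inv s}

theorem Nested.sup (htr : Nested 𝒰 t r) (hts : Nested 𝒰 t s) (hrs : ¬ Nested 𝒰 r s) :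
    Nested 𝒰 t (r ⊔ s) := by
  have of_le_sup {x : U} (h : Nested 𝒰 t x) (hx : x ≤ r ⊔ s) :
      Nested 𝒰 t (r ⊔ s) ∨ x ≤ t ∨ x ≤ 𝒰.inv t := by
    rcases h with h | h | h | h
    · exact Or.inl (Or.inl (h.trans hx))
    · exact Or.inr (Or.inr (𝒰.le_inv_comm_s16.1 h))
    · exact Or.inl (Or.inr (Or.inr (Or.inl (h.trans hx))))
    · exact Or.inr (Or.inl (𝒰.inv_le_inv_iff.1 h))
  rcases of_le_sup htr le_sup_left with h | hr
  · exact h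
  rcases of_le_sup hts le_sup_right with h | hs
  · exact h
  rcases hr with hr | hr <;> rcases hs with hs | hs
  · exact Or.inr (Or.inr (Or.inr (𝒰.inv_le_inv_iff.2 (sup_le hr hs))))
  · exact absurd (Or.inr (Or.inl (hr.trans (𝒰.le_inv_comm_s16.1 hs)))) hrs
  · exact absurd (Or.inr (Or.inl (hr.trans (𝒰.inv_le_inv_iff.2 hs)))) hrs
  · exact Or.inr (Or.inl (𝒰.le_inv_comm_s16.1 (sup_le hr hs)))

theorem Nested.of_mem_corners (htr : Nested 𝒰 t r) (hts : Nested 𝒰 t s) (hrs : ¬ Nested 𝒰 r s)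
    (hc : c ∈ corners 𝒰 r s) : Nested 𝒰 t c := by
  obtain ⟨r', rfl | rfl, s', rfl | rfl, rfl⟩ := hc <;> apply Nested.sup <;>
    simpa only [nested_inv_left, nested_inv_right]

theorem nested_of_mem_corners (hc : c ∈ corners 𝒰 r s) : Nested 𝒰 r c := by
  obtain ⟨r', rfl | rfl, s', -, rfl⟩ := hc
  · exact Or.inl le_sup_left
  · exact Or.inr (Or.inr (Or.inl le_sup_left))

theorem NestedSet.insert {N : Set U} {a : U} (hN : NestedSet 𝒰 N)
    (ha : ∀ r ∈ N, Nested 𝒰 r a) : NestedSet 𝒰 (insert a N) := by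
  rintro x (rfl | hx) y (rfl | hy)
  · exact Nested.refl _
  · exact (ha y hy).symm
  · exact ha x hx
  · exact hN x hx y hy

theorem NestedSet.union_preimage_inv {N : Set U} (hN : NestedSet 𝒰 N) :
    NestedSet 𝒰 (N ∪ 𝒰.inv ⁻¹' N) := by
  rintro r (hr | hr) s (hs | hs)
  · exact hN r hr s hs
  · exact nested_inv_right.1 (hN _ hr _ hs)
  · exact nested_inv_left.1 (hN _ hr _ hs)
  · exact nested_inv_left.1 (nested_inv_right.1 (hN _ hr _ hs))

end Nested

section Splinter

variable {𝒰 : SepUniverse U}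

theorem NestedSet.exists_mem_forall_nested {N B : Set U} (hN : NestedSet 𝒰 N) (hB : B.Nonempty)
    (hcorner : ∀ r ∈ N, ∀ b ∈ B, ¬ Nested 𝒰 r b → ∃ c ∈ B, c ∈ corners 𝒰 r b) :
    ∃ b ∈ B, ∀ r ∈ N, Nested 𝒰 r b := by
  let crossing (b : U) : Set U := {r ∈ N | ¬ Nested 𝒰 r b}
  obtain ⟨b, hb, hmin⟩ :=
    Set.exists_min_image B (fun b => (crossing b).ncard) (Set.toFinite B) hB
  refine ⟨b, hb, fun r hr => by_contra fun hrb => ?_⟩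
  obtain ⟨c, hcB, hc⟩ := hcorner r hr b hb hrb
  have hsub : crossing c ⊆ crossing b := fun t ht =>
    ⟨ht.1, fun htb => ht.2 ((hN t ht.1 r hr).of_mem_corners htb hrb hc)⟩
  have hssub : crossing c ⊂ crossing b :=
    hsub.ssubset_of_mem_notMem ⟨hr, hrb⟩ fun h => h.2 (nested_of_mem_corners hc)
  exact (hmin c hcB).not_gt (Set.ncard_lt_ncard hssub)

/-- The family `𝒜` of sets of separations splinters hierarchically with respect to the weight `w`:
if `a ∈ A` crosses `b ∈ B` and is not heavier, then `B` contains `a` or a corner of `a` and `b`. -/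
def SplintersHierarchically (𝒰 : SepUniverse U) (w : U → ℕ) (𝒜 : Set (Set U)) : Prop :=
  ∀ A ∈ 𝒜, ∀ B ∈ 𝒜, ∀ a ∈ A, ∀ b ∈ B, w a ≤ w b → ¬ Nested 𝒰 a b →
    a ∈ B ∨ ∃ c ∈ B, c ∈ corners 𝒰 a b

variable {w : U → ℕ} {𝒜 : Set (Set U)}

theorem SplintersHierarchically.exists_nestedSet_of_lt (h𝒜 : SplintersHierarchically 𝒰 w 𝒜)
    (hw : ∀ A ∈ 𝒜, ∀ a ∈ A, ∀ b ∈ A, w a = w b) (n : ℕ) :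
    ∃ N ⊆ {a ∈ ⋃₀ 𝒜 | w a < n}, NestedSet 𝒰 N ∧
      ∀ B ∈ 𝒜, ∀ b ∈ B, w b < n → (N ∩ B).Nonempty := by
  induction n with
  | zero => exact ⟨∅, Set.empty_subset _, fun _ h => h.elim, by simp⟩
  | succ n ih =>
    obtain ⟨N₀, hsub₀, hnest₀, hmeet₀⟩ := ih
    let admissible : Set (Set U) := {N | N ⊆ {a ∈ ⋃₀ 𝒜 | w a < n + 1} ∧ NestedSet 𝒰 N}
    have hN₀ : N₀ ∈ admissible :=
      ⟨fun a ha => ⟨(hsub₀ ha).1, (hsub₀ ha).2.trans n.lt_succ_self⟩, hnest₀⟩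
    obtain ⟨N, hN₀N, hN⟩ := (Set.toFinite admissible).exists_le_maximal hN₀
    obtain ⟨hsub, hnest⟩ := hN.prop
    refine ⟨N, hsub, hnest, fun B hB b hb hbn => ?_⟩
    by_cases hlt : w b < n
    · exact (hmeet₀ B hB b hb hlt).mono (Set.inter_subset_inter_left B hN₀N)
    by_contra hdisj
    have hcorner : ∀ r ∈ N, ∀ b' ∈ B, ¬ Nested 𝒰 r b' → ∃ c ∈ B, c ∈ corners 𝒰 r b' := by
      intro r hr b' hb' hcross
      obtain ⟨⟨A, hA, hrA⟩, hrn⟩ := hsub hr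
      have hle : w r ≤ w b' := by
        rw [hw B hB b' hb' b hb]
        omega
      exact (h𝒜 A hA B hB r hrA b' hb' hle hcross).resolve_left fun hrB => hdisj ⟨r, hr, hrB⟩
    obtain ⟨a, ha, hnested⟩ := hnest.exists_mem_forall_nested ⟨b, hb⟩ hcorner
    have hins : insert a N ∈ admissible :=
      ⟨Set.insert_subset ⟨⟨B, hB, ha⟩, hw B hB a ha b hb ▸ hbn⟩ hsub, hnest.insert hnested⟩
    exact hdisj ⟨a, hN.le_of_ge hins (Set.subset_insert a N) (Set.mem_insert a N), ha⟩

theorem SplintersHierarchically.exists_nestedSet (h𝒜 : SplintersHierarchically 𝒰 w 𝒜)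
    (hw : ∀ A ∈ 𝒜, ∀ a ∈ A, ∀ b ∈ A, w a = w b) :
    ∃ N ⊆ ⋃₀ 𝒜, NestedSet 𝒰 N ∧ ∀ B ∈ 𝒜, B.Nonempty → (N ∩ B).Nonempty := by
  obtain ⟨n, hn⟩ := (Set.finite_range w).bddAbove
  obtain ⟨N, hsub, hnest, hmeet⟩ := h𝒜.exists_nestedSet_of_lt hw (n + 1)
  exact ⟨N, fun a ha => (hsub ha).1, hnest, fun B hB ⟨b, hb⟩ =>
    hmeet B hB b hb (Nat.lt_succ_of_le (hn (Set.mem_range_self b)))⟩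

end Splinter

theorem Consistent.eq_of_inv_le {𝒰 : SepUniverse U} {S O : Set U} (hc : Consistent 𝒰 O)
    (hO : IsOrientation 𝒰 S O) {r s : U} (hr : r ∈ O) (hs : s ∈ O) (hrs : 𝒰.inv r ≤ s) :
    r = s := by
  have hpair : ({r, 𝒰.inv r} : Set U) = {s, 𝒰.inv s} := by_contra fun h => hc r hr s hs h hrs
  have hmem : r ∈ ({s, 𝒰.inv s} : Set U) := hpair ▸ Set.mem_insert r _
  rcases hmem with h | rfl
  · exact h
  · exact ((hO.2 s (hO.1 hs)).2 hs hr).symm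

namespace ProfileIn

variable {𝒱 : SubmodUniverse U} {P : Set U} {r s : U}

theorem inv_notMem (hP : ProfileIn 𝒱 P) (hs : s ∈ P) : 𝒱.inv s ∉ P := by
  obtain ⟨k, -, -, hsup⟩ := hP
  simpa only [sup_idem] using hsup s hs s hs

theorem mem_or_inv_mem (hP : ProfileIn 𝒱 P) (hs : s ∈ P) (hrs : 𝒱.ord r ≤ 𝒱.ord s) :
    r ∈ P ∨ 𝒱.inv r ∈ P := by
  obtain ⟨k, hor, -⟩ := hP
  exact (hor.2 r (hrs.trans_lt (hor.1 hs))).1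

theorem eq_of_inv_le (hP : ProfileIn 𝒱 P) (hr : r ∈ P) (hs : s ∈ P) (hrs : 𝒱.inv r ≤ s) :
    r = s := by
  obtain ⟨k, hor, hcons, -⟩ := hP
  exact hcons.eq_of_inv_le hor hr hs hrs

theorem mem_of_le_of_ord_lt (hP : ProfileIn 𝒱 P) (hs : s ∈ P) (hrs : r ≤ s)
    (hord : 𝒱.ord r < 𝒱.ord s) : r ∈ P := by
  refine (hP.mem_or_inv_mem hs hord.le).resolve_right fun hr => hord.ne ?_
  rw [← hP.eq_of_inv_le hr hs (by rwa [𝒱.inv_inv]), 𝒱.ord_inv]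

theorem sup_mem (hP : ProfileIn 𝒱 P) (hr : r ∈ P) (hs : s ∈ P)
    (hord : 𝒱.ord (r ⊔ s) ≤ 𝒱.ord s) : r ⊔ s ∈ P := by
  refine (hP.mem_or_inv_mem hs hord).resolve_right ?_
  obtain ⟨k, -, -, hsup⟩ := hP
  exact hsup r hr s hs

end ProfileIn

/-- The oriented form of `EffDistinguishes`: `s` lies in `P`, its inverse in `Q`, and no separation
of smaller order does this. Separations `t` with `t* ∈ P` and `t ∈ Q` need not be mentioned, since
`t*` has the same order. -/
structure EffSeparates (𝒱 : SubmodUniverse U) (s : U) (P Q : Set U) : Prop where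
  mem : s ∈ P
  inv_mem : 𝒱.inv s ∈ Q
  ord_le : ∀ t ∈ P, 𝒱.inv t ∈ Q → 𝒱.ord s ≤ 𝒱.ord t

section EffSeparates

variable {𝒱 : SubmodUniverse U} {P Q P' Q' : Set U} {r s x f : U}

theorem EffSeparates.symm (h : EffSeparates 𝒱 s P Q) : EffSeparates 𝒱 (𝒱.inv s) Q P where
  mem := h.inv_mem
  inv_mem := by rw [𝒱.inv_inv]; exact h.mem
  ord_le t ht ht' := by
    rw [𝒱.ord_inv, ← 𝒱.ord_inv t]
    exact h.ord_le _ ht' (by rwa [𝒱.inv_inv])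

theorem effDistinguishes_iff :
    EffDistinguishes 𝒱 s P Q ↔ EffSeparates 𝒱 s P Q ∨ EffSeparates 𝒱 s Q P := by
  constructor
  · rintro ⟨⟨hP, hQ⟩ | ⟨hP, hQ⟩, hmin⟩
    · exact Or.inl ⟨hP, hQ, fun t htP htQ => hmin t (Or.inl ⟨htP, htQ⟩)⟩
    · exact Or.inr ⟨hQ, hP, fun t htQ htP => hmin t (Or.inr ⟨htP, htQ⟩)⟩
  · rintro (h | h)
    · refine ⟨Or.inl ⟨h.mem, h.inv_mem⟩, ?_⟩
      rintro t (ht | ht)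
      · exact h.ord_le t ht.1 ht.2
      · exact 𝒱.ord_inv s ▸ h.symm.ord_le t ht.2 ht.1
    · refine ⟨Or.inr ⟨h.inv_mem, h.mem⟩, ?_⟩
      rintro t (ht | ht)
      · exact 𝒱.ord_inv s ▸ h.symm.ord_le t ht.1 ht.2
      · exact h.ord_le t ht.2 ht.1

theorem effDistinguishes_comm : EffDistinguishes 𝒱 s P Q ↔ EffDistinguishes 𝒱 s Q P := by
  rw [effDistinguishes_iff, effDistinguishes_iff, or_comm]

theorem effDistinguishes_inv :
    EffDistinguishes 𝒱 (𝒱.inv s) P Q ↔ EffDistinguishes 𝒱 s P Q := by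
  simp only [EffDistinguishes, Distinguishes, 𝒱.inv_inv, 𝒱.ord_inv, or_comm]

theorem exists_effDistinguishes (h : Distinguishable 𝒱.toSepUniverse P Q) :
    ∃ s, EffDistinguishes 𝒱 s P Q :=
  Set.exists_min_image {s | Distinguishes 𝒱.toSepUniverse s P Q} 𝒱.ord (Set.toFinite _) h

namespace EffSeparates

theorem mem_iff_of_ord_lt (hP : ProfileIn 𝒱 P) (hQ : ProfileIn 𝒱 Q) (h : EffSeparates 𝒱 s P Q)
    (hx : 𝒱.ord x < 𝒱.ord s) : x ∈ P ↔ x ∈ Q := by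
  constructor <;> intro hmem
  · refine (hQ.mem_or_inv_mem h.inv_mem (by rw [𝒱.ord_inv]; exact hx.le)).resolve_right ?_
    exact fun hinv => (h.ord_le x hmem hinv).not_gt hx
  · refine (hP.mem_or_inv_mem h.mem hx.le).resolve_right fun hinv => ?_
    have := h.symm.ord_le x hmem hinv
    rw [𝒱.ord_inv] at this
    exact this.not_gt hx

theorem ord_le_of_le (hQ : ProfileIn 𝒱 Q) (h : EffSeparates 𝒱 s P Q) (hx : x ∈ P)
    (hsx : s ≤ x) : 𝒱.ord s ≤ 𝒱.ord x := by
  by_contra! hlt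
  refine (h.ord_le x hx ?_).not_gt hlt
  exact hQ.mem_of_le_of_ord_lt h.inv_mem (𝒱.inv_le_inv_iff.2 hsx) (by simpa only [𝒱.ord_inv])

theorem sup (hP : ProfileIn 𝒱 P) (hQ : ProfileIn 𝒱 Q) (h : EffSeparates 𝒱 s P Q) (hr : r ∈ P)
    (hord : 𝒱.ord (r ⊔ s) ≤ 𝒱.ord s) : EffSeparates 𝒱 (r ⊔ s) P Q where
  mem := hP.sup_mem hr h.mem hord
  inv_mem := by
    refine (hQ.mem_or_inv_mem h.inv_mem (by rwa [𝒱.ord_inv])).resolve_left fun hmem => ?_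
    have heq : 𝒱.inv s = r ⊔ s :=
      hQ.eq_of_inv_le h.inv_mem hmem (by rw [𝒱.inv_inv]; exact le_sup_right)
    exact hP.inv_notMem h.mem (heq ▸ hP.sup_mem hr h.mem hord)
  ord_le t htP htQ := hord.trans (h.ord_le t htP htQ)

/-- By efficiency of `s` also `f* ∈ Q`, which rules out `f ≤ s` and `f ≤ s*`. -/
theorem le_or_inv_le_of_nested (hP : ProfileIn 𝒱 P) (hQ : ProfileIn 𝒱 Q)
    (h : EffSeparates 𝒱 s P Q) (hf : 𝒱.inv f ∈ P) (hord : 𝒱.ord f < 𝒱.ord s)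
    (hn : Nested 𝒱.toSepUniverse s f) : s ≤ f ∨ 𝒱.inv s ≤ f := by
  rcases hn with hsf | hsf | hsf | hsf
  · exact Or.inl hsf
  · have hfQ : f ∈ Q :=
      hQ.mem_of_le_of_ord_lt h.inv_mem (𝒱.le_inv_comm_s16.1 hsf) (by rwa [𝒱.ord_inv])
    exact absurd hf (hP.inv_notMem ((h.mem_iff_of_ord_lt hP hQ hord).2 hfQ))
  · exact Or.inr hsf
  · have hfP : f ∈ P := hP.mem_of_le_of_ord_lt h.mem (𝒱.inv_le_inv_iff.1 hsf) hord
    exact absurd hf (hP.inv_notMem hfP)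

end EffSeparates

theorem StronglyRobust.ord_sup_le_or (hrob : StronglyRobust 𝒱 P) (hQ : ProfileIn 𝒱 Q)
    (h : EffSeparates 𝒱 (𝒱.inv r) P Q) (s : U) :
    𝒱.ord (r ⊔ s) ≤ 𝒱.ord s ∨ 𝒱.ord (r ⊔ 𝒱.inv s) ≤ 𝒱.ord s := by
  by_contra! hlarge
  have hsub := 𝒱.ord_sup_add_ord_inv_sup_inv_le r s
  have hsub' := 𝒱.ord_sup_add_ord_inv_sup_inv_le r (𝒱.inv s)
  rw [𝒱.ord_inv s, 𝒱.inv_inv s] at hsub'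
  have hs : 𝒱.ord (𝒱.inv r ⊔ s) < 𝒱.ord (𝒱.inv r) := by rw [𝒱.ord_inv r]; omega
  have hs' : 𝒱.ord (𝒱.inv r ⊔ 𝒱.inv s) < 𝒱.ord (𝒱.inv r) := by rw [𝒱.ord_inv r]; omega
  rcases hrob _ h.mem s hs.le hs'.le with hmem | hmem
  · exact (h.ord_le_of_le hQ hmem le_sup_left).not_gt hs
  · exact (h.ord_le_of_le hQ hmem le_sup_left).not_gt hs'

theorem EffDistinguishes.ord_sup_le_or (hP : ProfileIn 𝒱 P ∧ StronglyRobust 𝒱 P)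
    (hQ : ProfileIn 𝒱 Q ∧ StronglyRobust 𝒱 Q) (h : EffDistinguishes 𝒱 r P Q) (s : U) :
    𝒱.ord (r ⊔ s) ≤ 𝒱.ord s ∨ 𝒱.ord (r ⊔ 𝒱.inv s) ≤ 𝒱.ord s := by
  rcases effDistinguishes_iff.1 h with h | h
  · exact hQ.2.ord_sup_le_or hP.1 h.symm s
  · exact hP.2.ord_sup_le_or hQ.1 h.symm s

theorem EffSeparates.effDistinguishes_sup_or_sup_inv (hP : ProfileIn 𝒱 P ∧ StronglyRobust 𝒱 P)
    (hP' : ProfileIn 𝒱 P' ∧ StronglyRobust 𝒱 P') (hQ : ProfileIn 𝒱 Q) (hQ' : ProfileIn 𝒱 Q')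
    (hr : EffDistinguishes 𝒱 r P P') (hs : EffSeparates 𝒱 s Q Q') (hrQ : r ∈ Q) (hrQ' : r ∈ Q') :
    EffDistinguishes 𝒱 (r ⊔ s) Q Q' ∨ EffDistinguishes 𝒱 (r ⊔ 𝒱.inv s) Q Q' := by
  simp only [effDistinguishes_iff]
  rcases hr.ord_sup_le_or hP hP' s with hord | hord
  · exact Or.inl (Or.inl (hs.sup hQ hQ' hrQ hord))
  · exact Or.inr (Or.inr (hs.symm.sup hQ' hQ hrQ' (by rwa [𝒱.ord_inv s])))

theorem EffSeparates.or_exists_corner (hP : ProfileIn 𝒱 P ∧ StronglyRobust 𝒱 P)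
    (hP' : ProfileIn 𝒱 P' ∧ StronglyRobust 𝒱 P') (hQ : ProfileIn 𝒱 Q) (hQ' : ProfileIn 𝒱 Q')
    (hr : EffDistinguishes 𝒱 r P P') (hs : EffSeparates 𝒱 s Q Q') (hord : 𝒱.ord r ≤ 𝒱.ord s) :
    EffDistinguishes 𝒱 r Q Q' ∨
      ∃ c, EffDistinguishes 𝒱 c Q Q' ∧ c ∈ corners 𝒱.toSepUniverse r s := by
  have corner {r' : U} (hr' : EffDistinguishes 𝒱 r' P P') (hmem : r' = r ∨ r' = 𝒱.inv r)
      (hrQ : r' ∈ Q) (hrQ' : r' ∈ Q') :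
      ∃ c, EffDistinguishes 𝒱 c Q Q' ∧ c ∈ corners 𝒱.toSepUniverse r s := by
    rcases hs.effDistinguishes_sup_or_sup_inv hP hP' hQ hQ' hr' hrQ hrQ' with h | h
    · exact ⟨_, h, Set.mem_image2_of_mem hmem (Or.inl rfl)⟩
    · exact ⟨_, h, Set.mem_image2_of_mem hmem (Or.inr rfl)⟩
  rcases hQ.mem_or_inv_mem hs.mem hord with hrQ | hrQ <;>
    rcases hQ'.mem_or_inv_mem hs.inv_mem (hord.trans_eq (𝒱.ord_inv s).symm) with hrQ' | hrQ'
  · exact Or.inr (corner hr (Or.inl rfl) hrQ hrQ')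
  · exact Or.inl (effDistinguishes_iff.2
      (Or.inl ⟨hrQ, hrQ', fun t ht ht' => hord.trans (hs.ord_le t ht ht')⟩))
  · have hord' : 𝒱.ord r ≤ 𝒱.ord (𝒱.inv s) := hord.trans_eq (𝒱.ord_inv s).symm
    exact Or.inl (effDistinguishes_iff.2
      (Or.inr ⟨hrQ', hrQ, fun t ht ht' => hord'.trans (hs.symm.ord_le t ht ht')⟩))
  · exact Or.inr (corner (effDistinguishes_inv.2 hr) (Or.inr rfl) hrQ hrQ')

theorem EffDistinguishes.or_exists_corner (hP : ProfileIn 𝒱 P ∧ StronglyRobust 𝒱 P)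
    (hP' : ProfileIn 𝒱 P' ∧ StronglyRobust 𝒱 P') (hQ : ProfileIn 𝒱 Q) (hQ' : ProfileIn 𝒱 Q')
    (hr : EffDistinguishes 𝒱 r P P') (hs : EffDistinguishes 𝒱 s Q Q')
    (hord : 𝒱.ord r ≤ 𝒱.ord s) :
    EffDistinguishes 𝒱 r Q Q' ∨
      ∃ c, EffDistinguishes 𝒱 c Q Q' ∧ c ∈ corners 𝒱.toSepUniverse r s := by
  rcases effDistinguishes_iff.1 hs with h | h
  · exact h.or_exists_corner hP hP' hQ hQ' hr hord
  · simp only [effDistinguishes_comm (P := Q) (Q := Q')]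
    exact h.or_exists_corner hP hP' hQ' hQ hr hord

/-- The sets of separations efficiently distinguishing a given pair of profiles in `𝔓`. -/
def effDistinguishers (𝒱 : SubmodUniverse U) (𝔓 : Set (Set U)) : Set (Set U) :=
  Set.image2 (fun P Q => {s | EffDistinguishes 𝒱 s P Q}) 𝔓 𝔓

theorem splintersHierarchically_effDistinguishers {𝔓 : Set (Set U)}
    (h𝔓 : ∀ P ∈ 𝔓, ProfileIn 𝒱 P ∧ StronglyRobust 𝒱 P) :
    SplintersHierarchically 𝒱.toSepUniverse 𝒱.ord (effDistinguishers 𝒱 𝔓) := by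
  rintro _ ⟨P, hP, P', hP', rfl⟩ _ ⟨Q, hQ, Q', hQ', rfl⟩ r hr s hs hord -
  exact EffDistinguishes.or_exists_corner (h𝔓 P hP) (h𝔓 P' hP') (h𝔓 Q hQ).1 (h𝔓 Q' hQ').1
    hr hs hord

end EffSeparates

/-- A tree of tangles for `𝔓`, encoded as the nested separation system of its edge labels: it
efficiently distinguishes all profiles in `𝔓`, and each of its members is needed for this. -/
structure IsEffTreeSet (𝒱 : SubmodUniverse U) (𝔓 : Set (Set U)) (N : Set U) : Prop where
  sepSystem : SepSystem 𝒱.toSepUniverse N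
  nestedSet : NestedSet 𝒱.toSepUniverse N
  exists_effSeparates : ∀ s ∈ N, ∃ P ∈ 𝔓, ∃ Q ∈ 𝔓, EffSeparates 𝒱 s P Q
  exists_mem : ∀ P ∈ 𝔓, ∀ Q ∈ 𝔓, P ≠ Q → ∃ s ∈ N, EffSeparates 𝒱 s P Q

theorem exists_isEffTreeSet {𝒱 : SubmodUniverse U} {𝔓 : Set (Set U)}
    (h𝔓 : ∀ P ∈ 𝔓, ProfileIn 𝒱 P ∧ StronglyRobust 𝒱 P)
    (hdist : ∀ P ∈ 𝔓, ∀ Q ∈ 𝔓, P ≠ Q → Distinguishable 𝒱.toSepUniverse P Q) :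
    ∃ N, IsEffTreeSet 𝒱 𝔓 N := by
  have hord : ∀ A ∈ effDistinguishers 𝒱 𝔓, ∀ a ∈ A, ∀ b ∈ A, 𝒱.ord a = 𝒱.ord b := by
    rintro _ ⟨P, -, Q, -, rfl⟩ a ha b hb
    exact le_antisymm (ha.2 b hb.1) (hb.2 a ha.1)
  obtain ⟨N, hsub, hnest, hmeet⟩ :=
    (splintersHierarchically_effDistinguishers h𝔓).exists_nestedSet hord
  have hsep : ∀ s ∈ N, ∃ P ∈ 𝔓, ∃ Q ∈ 𝔓, EffSeparates 𝒱 s P Q := by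
    intro s hs
    obtain ⟨_, ⟨P, hP, Q, hQ, rfl⟩, h⟩ := hsub hs
    rcases effDistinguishes_iff.1 h with h | h
    · exact ⟨P, hP, Q, hQ, h⟩
    · exact ⟨Q, hQ, P, hP, h⟩
  refine ⟨N ∪ 𝒱.inv ⁻¹' N, ?_, hnest.union_preimage_inv, ?_, ?_⟩
  · rintro s (hs | hs)
    · exact Or.inr (by rwa [Set.mem_preimage, 𝒱.inv_inv])
    · exact Or.inl hs
  · rintro s (hs | hs)
    · exact hsep s hs
    · obtain ⟨P, hP, Q, hQ, h⟩ := hsep _ hs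
      exact ⟨Q, hQ, P, hP, 𝒱.inv_inv s ▸ h.symm⟩
  · intro P hP Q hQ hPQ
    obtain ⟨s, hsN, hs⟩ := hmeet _ (Set.mem_image2_of_mem hP hQ)
      (exists_effDistinguishes (hdist P hP Q hQ hPQ))
    rcases effDistinguishes_iff.1 hs with h | h
    · exact ⟨s, Or.inl hsN, h⟩
    · exact ⟨𝒱.inv s, Or.inr (by rwa [Set.mem_preimage, 𝒱.inv_inv]), h.symm⟩

section SinkStar

/-- The maximal elements of `N ∩ O`. If `N` is the edge set of a tree, this is the star at the node
towards which `O` orients the edges. -/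
def sinkStar {α : Type*} [Preorder α] (N O : Set α) : Set α :=
  {s | Maximal (· ∈ N ∩ O) s}

theorem sinkStar_subset_inter {α : Type*} [Preorder α] {N O : Set α} : sinkStar N O ⊆ N ∩ O :=
  fun _ hs => hs.prop

theorem exists_mem_sinkStar_le {α : Type*} [Preorder α] [Finite α] {N O : Set α} {s : α}
    (hN : s ∈ N) (hO : s ∈ O) : ∃ g ∈ sinkStar N O, s ≤ g := by
  obtain ⟨g, hsg, hg⟩ := (Set.toFinite (N ∩ O)).exists_le_maximal ⟨hN, hO⟩
  exact ⟨g, hg, hsg⟩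

variable {𝒰 : SepUniverse U} {N O : Set U} {s f : U}

theorem eq_of_mem_sinkStar (hO : IsOrientation 𝒰 Set.univ O) (hc : Consistent 𝒰 O)
    (hs : s ∈ sinkStar N O) (hf : f ∈ sinkStar N O) (hsf : s ≤ f ∨ 𝒰.inv s ≤ f) : s = f := by
  rcases hsf with h | h
  · exact hs.eq_of_le hf.prop h
  · exact hc.eq_of_inv_le hO hs.prop.2 hf.prop.2 h

theorem isStar_sinkStar (hN : NestedSet 𝒰 N) (hO : IsOrientation 𝒰 Set.univ O)
    (hc : Consistent 𝒰 O) : IsStar 𝒰 (sinkStar N O) := by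
  intro r hr s hs hne
  rcases hN r hr.prop.1 s hs.prop.1 with h | h | h | h
  · exact absurd (eq_of_mem_sinkStar hO hc hr hs (Or.inl h)) hne
  · exact h
  · exact absurd (eq_of_mem_sinkStar hO hc hr hs (Or.inr h)) hne
  · exact absurd (eq_of_mem_sinkStar hO hc hs hr (Or.inl (𝒰.inv_le_inv_iff.1 h))).symm hne

theorem exists_mem_sinkStar_inv_le (hN : SepSystem 𝒰 N) (hO : IsOrientation 𝒰 Set.univ O)
    (hs : s ∈ sinkStar N O) (hf : f ∈ N) (hsf : s ≤ f ∨ 𝒰.inv s ≤ f) :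
    f = s ∨ ∃ g ∈ sinkStar N O, 𝒰.inv g ≤ f := by
  rcases hsf with h | h
  · rcases (hO.2 f (Set.mem_univ f)).1 with hfO | hfO
    · exact Or.inl (hs.eq_of_le ⟨hf, hfO⟩ h).symm
    · obtain ⟨g, hg, hfg⟩ := exists_mem_sinkStar_le (hN f hf) hfO
      exact Or.inr ⟨g, hg, 𝒰.inv_le_comm_s16.1 hfg⟩
  · exact Or.inr ⟨s, hs, h⟩

end SinkStar

namespace IsEffTreeSet

variable {𝒱 : SubmodUniverse U} {𝔓 : Set (Set U)} {N O P Q : Set U}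

theorem eq_of_sinkStar_subset (hN : IsEffTreeSet 𝒱 𝔓 N) (h𝔓 : ∀ P ∈ 𝔓, ProfileIn 𝒱 P)
    (hO : IsOrientation 𝒱.toSepUniverse Set.univ O) (hP : P ∈ 𝔓) (hQ : Q ∈ 𝔓)
    (hσP : sinkStar N O ⊆ P) (hσQ : sinkStar N O ⊆ Q) : P = Q := by
  have notMem {P Q : Set U} (hP : P ∈ 𝔓) (hQ : Q ∈ 𝔓) (hσP : sinkStar N O ⊆ P)
      (hσQ : sinkStar N O ⊆ Q) {f : U} (hfN : f ∈ N) (hf : EffSeparates 𝒱 f P Q) : f ∉ O := by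
    intro hfO
    obtain ⟨g, hg, hfg⟩ := exists_mem_sinkStar_le hfN hfO
    have heq : 𝒱.inv f = g :=
      (h𝔓 Q hQ).eq_of_inv_le hf.inv_mem (hσQ hg) (by rwa [𝒱.inv_inv])
    exact (h𝔓 P hP).inv_notMem hf.mem (heq ▸ hσP hg)
  by_contra hne
  obtain ⟨f, hfN, hf⟩ := hN.exists_mem P hP Q hQ hne
  rcases (hO.2 f (Set.mem_univ f)).1 with hfO | hfO
  · exact notMem hP hQ hσP hσQ hfN hf hfO
  · exact notMem hQ hP hσQ hσP (hN.sepSystem f hfN) hf.symm hfO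

theorem exists_mem_sinkStar_weaklyOrientsAs_inv (hN : IsEffTreeSet 𝒱 𝔓 N)
    (h𝔓 : ∀ P ∈ 𝔓, ProfileIn 𝒱 P) (hO : IsOrientation 𝒱.toSepUniverse Set.univ O) (hP : P ∈ 𝔓)
    (hσ : ¬ sinkStar N O ⊆ P) : ∃ s ∈ sinkStar N O, WeaklyOrientsAs P (𝒱.inv s) := by
  obtain ⟨s, hs, hsP⟩ := Set.not_subset.1 hσ
  by_cases hsP' : 𝒱.inv s ∈ P
  · exact ⟨s, hs, 𝒱.inv s, hsP', le_rfl⟩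
  obtain ⟨Q, hQ, Q', hQ', hsQ⟩ := hN.exists_effSeparates s (sinkStar_subset_inter hs).1
  have hPQ : P ≠ Q := fun h => hsP (h ▸ hsQ.mem)
  obtain ⟨f, hfN, hf⟩ := hN.exists_mem P hP Q hQ hPQ
  have hord : 𝒱.ord f < 𝒱.ord s := by
    by_contra! hle
    exact ((h𝔓 P hP).mem_or_inv_mem hf.mem hle).elim hsP hsP'
  have hsf : s ≤ f ∨ 𝒱.inv s ≤ f :=
    hsQ.le_or_inv_le_of_nested (h𝔓 Q hQ) (h𝔓 Q' hQ') hf.inv_mem hord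
      (hN.nestedSet s (sinkStar_subset_inter hs).1 f hfN)
  rcases exists_mem_sinkStar_inv_le hN.sepSystem hO hs hfN hsf with rfl | ⟨g, hg, hgf⟩
  · exact absurd hf.mem hsP
  · exact ⟨g, hg, f, hf.mem, hgf⟩

theorem effProp_sinkStar (hN : IsEffTreeSet 𝒱 𝔓 N) (h𝔓 : ∀ P ∈ 𝔓, ProfileIn 𝒱 P)
    (hO : IsOrientation 𝒱.toSepUniverse Set.univ O) (hc : Consistent 𝒱.toSepUniverse O)
    (hP : P ∈ 𝔓) (hσ : sinkStar N O ⊆ P) : EffProp 𝒱 (sinkStar N O) P := by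
  rintro ⟨s, hs, x, hxP, hsx, hxs⟩
  obtain ⟨Q, hQ, Q', hQ', hsQ⟩ := hN.exists_effSeparates s (sinkStar_subset_inter hs).1
  have hxQ' : 𝒱.inv x ∈ Q' :=
    (h𝔓 Q' hQ').mem_of_le_of_ord_lt hsQ.inv_mem (𝒱.inv_le_inv_iff.2 hsx)
      (by simpa only [𝒱.ord_inv])
  have hxQ : 𝒱.inv x ∈ Q :=
    (hsQ.mem_iff_of_ord_lt (h𝔓 Q hQ) (h𝔓 Q' hQ') (by rwa [𝒱.ord_inv])).2 hxQ'
  have hPQ : P ≠ Q := fun h => (h𝔓 P hP).inv_notMem hxP (h ▸ hxQ)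
  obtain ⟨f, hfN, hf⟩ := hN.exists_mem P hP Q hQ hPQ
  have hord : 𝒱.ord f < 𝒱.ord s := (hf.ord_le x hxP hxQ).trans_lt hxs
  have hsf : s ≤ f ∨ 𝒱.inv s ≤ f :=
    hsQ.le_or_inv_le_of_nested (h𝔓 Q hQ) (h𝔓 Q' hQ') hf.inv_mem hord
      (hN.nestedSet s (sinkStar_subset_inter hs).1 f hfN)
  have hfσ : f ∈ sinkStar N O := by
    rcases exists_mem_sinkStar_inv_le hN.sepSystem hO hs hfN hsf with rfl | ⟨g, hg, hgf⟩
    · exact hs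
    · exact (h𝔓 P hP).eq_of_inv_le (hσ hg) hf.mem hgf ▸ hg
  exact hord.ne (congrArg 𝒱.ord (eq_of_mem_sinkStar hO hc hs hfσ hsf).symm)

theorem sinkStar_mem_Fd (hN : IsEffTreeSet 𝒱 𝔓 N) (h𝔓 : ∀ P ∈ 𝔓, ProfileIn 𝒱 P)
    (hO : IsOrientation 𝒱.toSepUniverse Set.univ O) (hc : Consistent 𝒱.toSepUniverse O) :
    sinkStar N O ∈ Fd 𝒱 𝔓 :=
  ⟨isStar_sinkStar hN.nestedSet hO hc,
    fun _ hP _ hQ => hN.eq_of_sinkStar_subset h𝔓 hO hP hQ,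
    fun _ hP => hN.exists_mem_sinkStar_weaklyOrientsAs_inv h𝔓 hO hP,
    fun _ hP => hN.effProp_sinkStar h𝔓 hO hc hP⟩

end IsEffTreeSet

theorem Fd_no_tangle_general (𝒱 : SubmodUniverse U) (𝔓 : Set (Set U))
    (h𝔓 : ∀ P ∈ 𝔓, ProfileIn 𝒱 P ∧ StronglyRobust 𝒱 P)
    (hdist : ∀ P ∈ 𝔓, ∀ Q ∈ 𝔓, P ≠ Q → Distinguishable 𝒱.toSepUniverse P Q)
    (O : Set U) (hO : IsOrientation 𝒱.toSepUniverse Set.univ O)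
    (hc : Consistent 𝒱.toSepUniverse O) :
    ∃ σ ∈ Fd 𝒱 𝔓, σ ⊆ O := by
  obtain ⟨N, hN⟩ := exists_isEffTreeSet h𝔓 hdist
  exact ⟨sinkStar N O, hN.sinkStar_mem_Fd (fun P hP => (h𝔓 P hP).1) hO hc,
    sinkStar_subset_inter.trans Set.inter_subset_right⟩

/-- In a distributive submodular universe with a nonempty set
`𝔓` of pairwise distinguishable strongly robust profiles, every consistent
orientation of the separation system `U` itself includes a star from `F_d`. -/
theorem Fd_no_tangle {W : Type*} [DistribLattice W] [Fintype W]
    (𝒱 : SubmodUniverse W) (𝔓 : Set (Set W)) (hne : 𝔓.Nonempty)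
    (h𝔓 : ∀ P ∈ 𝔓, ProfileIn 𝒱 P ∧ StronglyRobust 𝒱 P)
    (hdist : ∀ P ∈ 𝔓, ∀ Q ∈ 𝔓, P ≠ Q → Distinguishable 𝒱.toSepUniverse P Q)
    (O : Set W) (hO : IsOrientation 𝒱.toSepUniverse Set.univ O)
    (hc : Consistent 𝒱.toSepUniverse O) :
    ∃ σ ∈ Fd 𝒱 𝔓, σ ⊆ O :=
  Fd_no_tangle_general 𝒱 𝔓 h𝔓 hdist O hO hc

end SepDemo
end
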